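/- For v ∈ ℝ³ and 1 ≤ k, ℓ ≤ 3, the spherical integrals satisfy ∫_{|ω|=1} ω_k ω_ℓ dω/(√(1+|v|²)+ω·v)⁴ = (16π/3) v_k v_ℓ + (4π/3) δ_{kℓ}. -/

import Mathlib

open MeasureTheory Real
open scoped RealInnerProductSpace

/-!
The Lorentz boost with four-velocity `(γ, v)`, `γ = √(1 + ‖v‖²)`, acts on the future light cone.
Identifying a null vector `(‖x‖, x)` with `x`, it becomes a positively homogeneous diffeomorphism
`B` of `E ∖ {0}` with inverse the boost of `-v`, such that `‖B x‖ = γ ‖x‖ + ⟪x, v⟫` and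
`det B'(x) = ‖B x‖ / ‖x‖`. Hence in dimension `n` the aberration map `ω ↦ B ω / ‖B ω‖` of the unit
sphere has Jacobian `(γ + ⟪ω, v⟫) ^ (1 - n)`, and substituting it turns the integral into that of
a product of two components of the inverse boost of `ω`. Such a component is `⟪ω, S a⟫ - ⟪v, a⟫`
with `S² x = x + ⟪x, v⟫ v`, so only the moments of the sphere of degree at most two are needed.
-/

open Module Set Metric

lemma volumeIoiPow_real_setOf_mul_lt_one (n : ℕ) {c : ℝ} (hc : 0 < c) :
    (Measure.volumeIoiPow n).real {r | (r : ℝ) * c < 1} = (n + 1 : ℝ)⁻¹ * (c ^ (n + 1))⁻¹ := by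
  have hset : {r : Ioi (0 : ℝ) | (r : ℝ) * c < 1} = Iio ⟨c⁻¹, inv_pos.2 hc⟩ := by
    ext r
    rw [mem_ofPred_eq, mem_Iio, ← Subtype.coe_lt_coe, ← lt_div_iff₀ hc, one_div]
  rw [hset, measureReal_def, Measure.volumeIoiPow_apply_Iio, ENNReal.toReal_ofReal (by positivity),
    inv_pow, div_eq_inv_mul]

lemma fderiv_smul_of_pos_homogeneous {E F : Type*} [NormedAddCommGroup E] [NormedSpace ℝ E]
    [NormedAddCommGroup F] [NormedSpace ℝ F] {B : E → F}
    (hB : ∀ r > (0 : ℝ), ∀ x, B (r • x) = r • B x) {r : ℝ} (hr : 0 < r) (x : E) :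
    fderiv ℝ B (r • x) = fderiv ℝ B x := by
  apply smul_right_injective (E →L[ℝ] F) hr.ne'
  change r • fderiv ℝ B (r • x) = r • fderiv ℝ B x
  rw [← fderiv_comp_smul, funext (hB r hr)]
  exact congrFun (fderiv_const_smul_field r) x

section Polar

variable {E F : Type*} [NormedAddCommGroup E] [NormedSpace ℝ E] [MeasurableSpace E] [BorelSpace E]
  [NormedAddCommGroup F]

lemma measurableEmbedding_smul_sphere :
    MeasurableEmbedding fun p : sphere (0 : E) 1 × Ioi (0 : ℝ) ↦ (p.2 : ℝ) • (p.1 : E) :=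
  (MeasurableEmbedding.subtype_coe (measurableSet_singleton (0 : E)).compl).comp
    (homeomorphUnitSphereProd E).symm.measurableEmbedding

variable [FiniteDimensional ℝ E] (μ : Measure E) [μ.IsAddHaarMeasure]

lemma measurePreserving_smul_sphere [Nontrivial E] :
    MeasurePreserving (fun p : sphere (0 : E) 1 × Ioi (0 : ℝ) ↦ (p.2 : ℝ) • (p.1 : E))
      (μ.toSphere.prod (Measure.volumeIoiPow (finrank ℝ E - 1))) μ := by
  have h := (measurePreserving_subtype_coe (measurableSet_singleton (0 : E)).compl).comp
    (μ.measurePreserving_homeomorphUnitSphereProd.symm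
      (homeomorphUnitSphereProd E).toMeasurableEquiv)
  rwa [restrict_compl_singleton] at h

variable [NormedSpace ℝ F]

lemma integrableOn_ball_of_integrable_sphere [Nontrivial E] {f : E → F}
    (hf : Integrable (fun ω : sphere (0 : E) 1 ↦ f ω) μ.toSphere) :
    IntegrableOn (fun x ↦ f (‖x‖⁻¹ • x)) (ball 0 1) μ := by
  rw [← integrable_indicator_iff measurableSet_ball,
    ← (measurePreserving_smul_sphere μ).integrable_comp_emb measurableEmbedding_smul_sphere]
  have hradial : Integrable ((Iio ⟨1, mem_Ioi.2 one_pos⟩).indicator fun _ ↦ (1 : ℝ))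
      (Measure.volumeIoiPow (finrank ℝ E - 1)) :=
    (integrable_indicator_iff measurableSet_Iio).2 <|
      integrableOn_const (by simp [Measure.volumeIoiPow_apply_Iio])
  refine (hradial.smul_prod hf).swap.congr (.of_forall fun ⟨ω, r⟩ ↦ ?_)
  have hr : (0 : ℝ) < r := r.2
  simp [indicator, norm_smul, abs_of_pos hr, smul_smul, hr.ne', ← Subtype.coe_lt_coe]

lemma setIntegral_sublevel_eq_integral_sphere [Nontrivial E] [CompleteSpace F] {q : E → ℝ}
    {h : E → F} (hq : ContinuousOn q {0}ᶜ) (hq_pos : ∀ x ≠ 0, 0 < q x)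
    (hq_smul : ∀ r > 0, ∀ x, q (r • x) = r * q x) (hh_smul : ∀ r > (0 : ℝ), ∀ x, h (r • x) = h x)
    (hh : IntegrableOn h ({0}ᶜ ∩ q ⁻¹' Iio 1) μ) :
    ∫ x in {0}ᶜ ∩ q ⁻¹' Iio 1, h x ∂μ
      = (finrank ℝ E : ℝ)⁻¹ • ∫ ω : sphere (0 : E) 1, (q ω ^ finrank ℝ E)⁻¹ • h ω ∂μ.toSphere := by
  have hmeas : MeasurableSet ({0}ᶜ ∩ q ⁻¹' Iio 1) :=
    (hq.isOpen_inter_preimage isOpen_compl_singleton isOpen_Iio).measurableSet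
  have hpolar (ω : sphere (0 : E) 1) (r : Ioi (0 : ℝ)) :
      ({0}ᶜ ∩ q ⁻¹' Iio 1).indicator h ((r : ℝ) • (ω : E))
        = {r : Ioi (0 : ℝ) | (r : ℝ) * q ω < 1}.indicator (fun _ ↦ h ω) r := by
    simp [indicator, hq_smul r r.2, hh_smul r r.2, r.2.out.ne', ne_zero_of_mem_unit_sphere ω]
  have hint := ((measurePreserving_smul_sphere μ).integrable_comp_emb
    measurableEmbedding_smul_sphere).2 ((integrable_indicator_iff hmeas).2 hh)
  have hdim : finrank ℝ E - 1 + 1 = finrank ℝ E := Nat.sub_add_cancel finrank_pos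
  rw [← integral_indicator hmeas, ← (measurePreserving_smul_sphere μ).integral_comp
    measurableEmbedding_smul_sphere]
  refine (integral_prod _ hint).trans ?_
  rw [← integral_smul]
  congr! with ω
  simp only [Function.comp_apply, hpolar]
  rw [integral_indicator_const _ (by measurability), volumeIoiPow_real_setOf_mul_lt_one _
    (hq_pos ω (ne_zero_of_mem_unit_sphere ω)), ← Nat.cast_add_one, hdim, mul_smul]

-- Both sides are `finrank ℝ E` times the integral of a function homogeneous of degree zero: the
-- left one over `{x | ‖B x‖ < 1}`, the right one over the image of that set under `B`, the unit
-- ball.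
theorem integral_sphere_comp_normalize [CompleteSpace F] {B : E → E} {f : E → F}
    (hB : DifferentiableOn ℝ B {0}ᶜ) (hB_bij : BijOn B {0}ᶜ {0}ᶜ)
    (hB_smul : ∀ r > (0 : ℝ), ∀ x, B (r • x) = r • B x)
    (hf : Integrable (fun ω : sphere (0 : E) 1 ↦ f ω) μ.toSphere) :
    ∫ ω : sphere (0 : E) 1,
        (‖B ω‖ ^ finrank ℝ E)⁻¹ • |(fderiv ℝ B ω).det| • f (‖B ω‖⁻¹ • B ω) ∂μ.toSphere
      = ∫ ω : sphere (0 : E) 1, f ω ∂μ.toSphere := by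
  rcases subsingleton_or_nontrivial E with hE | hE
  · simp [(Measure.toSphere_eq_zero_iff μ).2 hE]
  have hn : (finrank ℝ E : ℝ)⁻¹ ≠ 0 := by simp [finrank_pos.ne']
  set U := {0}ᶜ ∩ (‖B ·‖) ⁻¹' Iio 1
  have hU_meas : MeasurableSet U :=
    (hB.continuousOn.norm.isOpen_inter_preimage isOpen_compl_singleton isOpen_Iio).measurableSet
  have hU_image : B '' U = {0}ᶜ ∩ norm ⁻¹' Iio 1 := by
    rw [← hB_bij.image_eq, ← image_inter_preimage]
    rfl
  have hB' (x : E) (hx : x ∈ U) : HasFDerivWithinAt B (fderiv ℝ B x) U x :=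
    (hB.differentiableAt (isOpen_compl_singleton.mem_nhds hx.1)).hasFDerivAt.hasFDerivWithinAt
  have hU_inj : InjOn B U := hB_bij.injOn.mono inter_subset_left
  have hball : IntegrableOn (fun x ↦ f (‖x‖⁻¹ • x)) (B '' U) μ :=
    (integrableOn_ball_of_integrable_sphere μ hf).mono_set
      fun x hx ↦ by simpa using (hU_image ▸ hx).2
  have hnormalize (r : ℝ) (hr : r > 0) (y : E) : ‖r • y‖⁻¹ • r • y = ‖y‖⁻¹ • y := by
    simp [norm_smul, abs_of_pos hr, smul_smul, hr.ne']
  apply smul_right_injective F hn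
  calc (finrank ℝ E : ℝ)⁻¹ • _
    _ = ∫ x in U, |(fderiv ℝ B x).det| • f (‖B x‖⁻¹ • B x) ∂μ :=
      (setIntegral_sublevel_eq_integral_sphere μ hB.continuousOn.norm
        (fun x hx ↦ norm_pos_iff.2 (hB_bij.mapsTo hx))
        (fun r hr x ↦ by simp [hB_smul r hr, norm_smul, abs_of_pos hr])
        (fun r hr x ↦ by
          simp only [hB_smul r hr, fderiv_smul_of_pos_homogeneous hB_smul hr, hnormalize r hr])
        ((integrableOn_image_iff_integrableOn_abs_det_fderiv_smul μ hU_meas hB' hU_inj _).1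
          hball)).symm
    _ = ∫ x in B '' U, f (‖x‖⁻¹ • x) ∂μ :=
      (integral_image_eq_integral_abs_det_fderiv_smul μ hU_meas hB' hU_inj
        fun x ↦ f (‖x‖⁻¹ • x)).symm
    _ = (finrank ℝ E : ℝ)⁻¹ • ∫ ω : sphere (0 : E) 1, f ω ∂μ.toSphere := by
      rw [hU_image] at hball ⊢
      rw [setIntegral_sublevel_eq_integral_sphere μ continuous_norm.continuousOn
        (fun x hx ↦ norm_pos_iff.2 hx) (fun r hr x ↦ by simp [norm_smul, abs_of_pos hr])
        (fun r hr x ↦ by rw [hnormalize r hr]) hball]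
      simp

end Polar

section Moments

variable {E : Type*} [NormedAddCommGroup E]

section NormedSpace

variable [NormedSpace ℝ E]

lemma abs_det_linearIsometryEquiv [FiniteDimensional ℝ E] (R : E ≃ₗᵢ[ℝ] E) :
    |LinearMap.det (R : E →ₗ[ℝ] E)| = 1 := by
  borelize E
  have h := Measure.addHaar_image_linearMap (Measure.addHaar : Measure E) R (ball 0 1)
  have hball : (R : E →ₗ[ℝ] E) '' ball 0 1 = ball 0 1 := by simp
  rw [hball, eq_comm, ENNReal.mul_eq_right (measure_ball_pos _ _ one_pos).ne'
    measure_ball_lt_top.ne] at h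
  simpa using h

variable [FiniteDimensional ℝ E] [MeasurableSpace E] [BorelSpace E]
  (μ : Measure E) [μ.IsAddHaarMeasure]

lemma integrable_sphere_of_continuous {F : Type*} [NormedAddCommGroup F] {f : E → F}
    (hf : Continuous f) : Integrable (fun ω : sphere (0 : E) 1 ↦ f ω) μ.toSphere :=
  (hf.comp continuous_subtype_val).integrable_of_hasCompactSupport
    (HasCompactSupport.of_compactSpace _)

lemma integral_sphere_comp_linearIsometryEquiv {F : Type*} [NormedAddCommGroup F] [NormedSpace ℝ F]
    [CompleteSpace F] (R : E ≃ₗᵢ[ℝ] E) {f : E → F}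
    (hf : Integrable (fun ω : sphere (0 : E) 1 ↦ f ω) μ.toSphere) :
    ∫ ω : sphere (0 : E) 1, f (R ω) ∂μ.toSphere = ∫ ω : sphere (0 : E) 1, f ω ∂μ.toSphere := by
  have hR_bij : BijOn R {0}ᶜ {0}ᶜ :=
    R.toEquiv.bijOn fun x ↦ not_congr R.map_eq_zero_iff
  rw [← integral_sphere_comp_normalize μ R.differentiable.differentiableOn hR_bij
    (fun r _ x ↦ map_smul R r x) hf]
  simp [R.fderiv, ContinuousLinearMap.det, abs_det_linearIsometryEquiv]

end NormedSpace

variable [InnerProductSpace ℝ E] [FiniteDimensional ℝ E] [MeasurableSpace E] [BorelSpace E]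
  (μ : Measure E) [μ.IsAddHaarMeasure]

lemma integral_sphere_inner (a : E) :
    ∫ ω : sphere (0 : E) 1, ⟪(ω : E), a⟫ ∂μ.toSphere = 0 := by
  have hf : Continuous fun x : E ↦ ⟪x, a⟫ := by fun_prop
  have h := integral_sphere_comp_linearIsometryEquiv μ (LinearIsometryEquiv.neg ℝ)
    (f := fun x ↦ ⟪x, a⟫) (integrable_sphere_of_continuous μ hf)
  simp only [LinearIsometryEquiv.coe_neg, inner_neg_left, integral_neg] at h
  linarith

lemma integral_sphere_inner_sq_eq_of_norm_eq {a b : E} (hab : ‖a‖ = ‖b‖) :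
    ∫ ω : sphere (0 : E) 1, ⟪(ω : E), a⟫ ^ 2 ∂μ.toSphere
      = ∫ ω : sphere (0 : E) 1, ⟪(ω : E), b⟫ ^ 2 ∂μ.toSphere := by
  have hf : Continuous fun x : E ↦ ⟪x, b⟫ ^ 2 := by fun_prop
  set R := (ℝ ∙ (a - b))ᗮ.reflection
  have hR : R a = b := Submodule.reflection_sub hab
  rw [← integral_sphere_comp_linearIsometryEquiv μ R (f := fun x ↦ ⟪x, b⟫ ^ 2)
    (integrable_sphere_of_continuous μ hf)]
  simp only [← hR, LinearIsometryEquiv.inner_map_map]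

lemma integral_sphere_inner_sq (a : E) :
    ∫ ω : sphere (0 : E) 1, ⟪(ω : E), a⟫ ^ 2 ∂μ.toSphere = μ.real (ball 0 1) * ‖a‖ ^ 2 := by
  rcases subsingleton_or_nontrivial E with hE | hE
  · simp [(Measure.toSphere_eq_zero_iff μ).2 hE, Subsingleton.elim a 0]
  set b := stdOrthonormalBasis ℝ E
  have hbasis (i) : ∫ ω : sphere (0 : E) 1, ⟪(ω : E), ‖a‖ • b i⟫ ^ 2 ∂μ.toSphere
      = ∫ ω : sphere (0 : E) 1, ⟪(ω : E), a⟫ ^ 2 ∂μ.toSphere :=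
    integral_sphere_inner_sq_eq_of_norm_eq μ (by simp [norm_smul])
  have hparseval (ω : sphere (0 : E) 1) : ∑ i, ⟪(ω : E), ‖a‖ • b i⟫ ^ 2 = ‖a‖ ^ 2 := by
    simp [inner_smul_right, mul_pow, ← Finset.mul_sum, b.sum_sq_inner_left]
  have hn : (finrank ℝ E : ℝ) ≠ 0 := by simp [finrank_pos.ne']
  apply mul_left_cancel₀ hn
  calc (finrank ℝ E : ℝ) * ∫ ω : sphere (0 : E) 1, ⟪(ω : E), a⟫ ^ 2 ∂μ.toSphere
    _ = ∑ i, ∫ ω : sphere (0 : E) 1, ⟪(ω : E), ‖a‖ • b i⟫ ^ 2 ∂μ.toSphere := by simp [hbasis]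
    _ = ∫ ω : sphere (0 : E) 1, ∑ i, ⟪(ω : E), ‖a‖ • b i⟫ ^ 2 ∂μ.toSphere :=
      (integral_finsetSum _ fun i _ ↦ integrable_sphere_of_continuous μ
        (f := fun x : E ↦ ⟪x, ‖a‖ • b i⟫ ^ 2) (by fun_prop)).symm
    _ = finrank ℝ E * (μ.real (ball 0 1) * ‖a‖ ^ 2) := by
      simp [hparseval, mul_assoc]

lemma integral_sphere_inner_mul_inner (a b : E) :
    ∫ ω : sphere (0 : E) 1, ⟪(ω : E), a⟫ * ⟪(ω : E), b⟫ ∂μ.toSphere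
      = μ.real (ball 0 1) * ⟪a, b⟫ := by
  have hint (c : E) : Integrable (fun ω : sphere (0 : E) 1 ↦ ⟪(ω : E), c⟫ ^ 2) μ.toSphere :=
    integrable_sphere_of_continuous μ (f := fun x : E ↦ ⟪x, c⟫ ^ 2) (by fun_prop)
  have hpolarize (ω : E) : ⟪ω, a⟫ * ⟪ω, b⟫ = (⟪ω, a + b⟫ ^ 2 - ⟪ω, a - b⟫ ^ 2) / 4 := by
    rw [inner_add_right, inner_sub_right]
    ring
  simp only [hpolarize]
  rw [integral_div, integral_sub (hint _) (hint _), integral_sphere_inner_sq,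
    integral_sphere_inner_sq, norm_add_sq_real, norm_sub_sq_real]
  ring

end Moments

section Boost

variable {E : Type*} [NormedAddCommGroup E]

/-- The Lorentz factor `γ` of the four-velocity `(γ, v)` with spatial part `v`. -/
noncomputable def lorentzFactor (v : E) : ℝ := √(1 + ‖v‖ ^ 2)

lemma lorentzFactor_sq (v : E) : lorentzFactor v ^ 2 = 1 + ‖v‖ ^ 2 := sq_sqrt (by positivity)

lemma lorentzFactor_neg (v : E) : lorentzFactor (-v) = lorentzFactor v := by
  simp [lorentzFactor]

lemma norm_lt_lorentzFactor (v : E) : ‖v‖ < lorentzFactor v := lt_sqrt_of_sq_lt (by linarith)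

lemma one_add_lorentzFactor_pos (v : E) : 0 < 1 + lorentzFactor v := by
  linarith [norm_nonneg v, norm_lt_lorentzFactor v]

variable [InnerProductSpace ℝ E]

/-- The spatial block of the Lorentz boost taking the rest frame to the four-velocity `(γ, v)`.
It is the positive square root of `x ↦ x + ⟪x, v⟫ • v`. -/
noncomputable def boostSpatial (v : E) : E →L[ℝ] E :=
  .id ℝ E + (innerSL ℝ v).smulRight ((1 + lorentzFactor v)⁻¹ • v)

/-- The action of the Lorentz boost with four-velocity `(γ, v)` on the future light cone, whose
point `(‖x‖, x)` is identified with its spatial part `x`. -/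
noncomputable def coneBoost (v x : E) : E := boostSpatial v x + ‖x‖ • v

lemma lorentzFactor_mul_norm_add_inner_pos (v : E) {x : E} (hx : x ≠ 0) :
    0 < lorentzFactor v * ‖x‖ + ⟪x, v⟫ := by
  have hcauchy : -(‖x‖ * ‖v‖) ≤ ⟪x, v⟫ := neg_le_of_abs_le (abs_real_inner_le_norm x v)
  nlinarith [mul_lt_mul_of_pos_right (norm_lt_lorentzFactor v) (norm_pos_iff.2 hx)]

lemma boostSpatial_apply (v x : E) :
    boostSpatial v x = x + (⟪x, v⟫ / (1 + lorentzFactor v)) • v := by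
  simp [boostSpatial, smul_smul, real_inner_comm, div_eq_mul_inv]

lemma boostSpatial_neg (v : E) : boostSpatial (-v) = boostSpatial v := by
  ext x
  simp [boostSpatial_apply, lorentzFactor_neg, neg_div]

lemma inner_boostSpatial_left (v x y : E) : ⟪boostSpatial v x, y⟫ = ⟪x, boostSpatial v y⟫ := by
  simp only [boostSpatial_apply, inner_add_left, inner_add_right, real_inner_smul_left,
    real_inner_smul_right, real_inner_comm v y]
  ring

lemma boostSpatial_self (v : E) : boostSpatial v v = lorentzFactor v • v := by
  have hγ := one_add_lorentzFactor_pos v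
  have hv : ‖v‖ ^ 2 = (lorentzFactor v - 1) * (1 + lorentzFactor v) := by
    linarith [lorentzFactor_sq v]
  rw [boostSpatial_apply, real_inner_self_eq_norm_sq, hv, mul_div_cancel_right₀ _ hγ.ne', sub_smul,
    one_smul, add_sub_cancel]

lemma boostSpatial_boostSpatial (v x : E) :
    boostSpatial v (boostSpatial v x) = x + ⟪x, v⟫ • v := by
  have hγ := one_add_lorentzFactor_pos v
  rw [boostSpatial_apply v x, map_add, map_smul, boostSpatial_self, boostSpatial_apply, smul_smul,
    add_assoc, ← add_smul]
  congr 2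
  field_simp

lemma norm_coneBoost (v x : E) : ‖coneBoost v x‖ = lorentzFactor v * ‖x‖ + ⟪x, v⟫ := by
  have hnonneg : 0 ≤ lorentzFactor v * ‖x‖ + ⟪x, v⟫ := by
    rcases eq_or_ne x 0 with rfl | hx
    · simp
    · exact (lorentzFactor_mul_norm_add_inner_pos v hx).le
  rw [← sq_eq_sq₀ (norm_nonneg _) hnonneg, coneBoost, norm_add_sq_real,
    ← real_inner_self_eq_norm_sq (boostSpatial v x), inner_boostSpatial_left,
    boostSpatial_boostSpatial, real_inner_smul_right, inner_boostSpatial_left, boostSpatial_self,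
    inner_add_right, real_inner_smul_right, real_inner_smul_right, real_inner_self_eq_norm_sq,
    norm_smul, norm_norm]
  linear_combination -‖x‖ ^ 2 * lorentzFactor_sq v

lemma coneBoost_neg_coneBoost (v x : E) : coneBoost (-v) (coneBoost v x) = x := by
  rw [coneBoost, norm_coneBoost, coneBoost, boostSpatial_neg, map_add, map_smul, boostSpatial_self,
    boostSpatial_boostSpatial]
  module

lemma coneBoost_coneBoost_neg (v x : E) : coneBoost v (coneBoost (-v) x) = x := by
  simpa only [neg_neg] using coneBoost_neg_coneBoost (-v) x

lemma coneBoost_smul (v : E) {r : ℝ} (hr : 0 < r) (x : E) :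
    coneBoost v (r • x) = r • coneBoost v x := by
  rw [coneBoost, coneBoost, map_smul, norm_smul, norm_of_nonneg hr.le, smul_add, smul_smul]

lemma continuous_coneBoost (v : E) : Continuous (coneBoost v) := by
  unfold coneBoost
  fun_prop

lemma bijOn_coneBoost (v : E) : BijOn (coneBoost v) {0}ᶜ {0}ᶜ := by
  have hmaps (w : E) : MapsTo (coneBoost w) {0}ᶜ {0}ᶜ := fun x hx h ↦
    (lorentzFactor_mul_norm_add_inner_pos w hx).ne' (by rw [← norm_coneBoost, h, norm_zero])
  exact InvOn.bijOn ⟨fun x _ ↦ coneBoost_neg_coneBoost v x, fun x _ ↦ coneBoost_coneBoost_neg v x⟩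
    (hmaps v) (hmaps (-v))

lemma hasFDerivAt_norm {x : E} (hx : x ≠ 0) :
    HasFDerivAt (‖·‖) (‖x‖⁻¹ • innerSL ℝ x) x := by
  have h := (hasStrictFDerivAt_norm_sq x).hasFDerivAt.sqrt (by positivity)
  simp only [sqrt_sq (norm_nonneg _)] at h
  convert h using 1
  rw [← Nat.cast_smul_eq_nsmul ℝ, smul_smul]
  congr 1
  field_simp
  norm_num

lemma hasFDerivAt_coneBoost (v : E) {x : E} (hx : x ≠ 0) :
    HasFDerivAt (coneBoost v) (boostSpatial v + (‖x‖⁻¹ • innerSL ℝ x).smulRight v) x :=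
  (boostSpatial v).hasFDerivAt.add ((hasFDerivAt_norm hx).smul_const v)

lemma det_fderiv_coneBoost [FiniteDimensional ℝ E] (v : E) {x : E} (hx : x ≠ 0) :
    (fderiv ℝ (coneBoost v) x).det = ‖coneBoost v x‖ / ‖x‖ := by
  have htransvection : (fderiv ℝ (coneBoost v) x : E →ₗ[ℝ] E) = LinearMap.transvection
      ((1 + lorentzFactor v)⁻¹ • innerSL ℝ v + ‖x‖⁻¹ • innerSL ℝ x : E →L[ℝ] ℝ).toLinearMap v := by
    ext y
    simp [(hasFDerivAt_coneBoost v hx).fderiv, boostSpatial, LinearMap.transvection.apply, add_smul,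
      smul_smul, mul_comm, add_assoc]
  have hγ := one_add_lorentzFactor_pos v
  calc (fderiv ℝ (coneBoost v) x).det
    _ = 1 + ((1 + lorentzFactor v)⁻¹ * ‖v‖ ^ 2 + ‖x‖⁻¹ * ⟪x, v⟫) := by
      rw [ContinuousLinearMap.det, htransvection, LinearMap.transvection.det]
      simp
    _ = (lorentzFactor v * ‖x‖ + ⟪x, v⟫) / ‖x‖ := by
      field_simp
      linear_combination -‖x‖ * lorentzFactor_sq v
    _ = ‖coneBoost v x‖ / ‖x‖ := by rw [norm_coneBoost]

variable [FiniteDimensional ℝ E] [MeasurableSpace E] [BorelSpace E]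
  (μ : Measure E) [μ.IsAddHaarMeasure]

lemma integral_sphere_inner_coneBoost_mul_inner_coneBoost (v a b : E) :
    ∫ ω : sphere (0 : E) 1, ⟪coneBoost v ω, a⟫ * ⟪coneBoost v ω, b⟫ ∂μ.toSphere
      = μ.real (ball 0 1) * (⟪a, b⟫ + (finrank ℝ E + 1) * (⟪v, a⟫ * ⟪v, b⟫)) := by
  have hinner (ω : sphere (0 : E) 1) (c : E) :
      ⟪coneBoost v ω, c⟫ = ⟪(ω : E), boostSpatial v c⟫ + ⟪v, c⟫ := by
    simp [coneBoost, inner_add_left, inner_boostSpatial_left]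
  have hexpand (ω : sphere (0 : E) 1) : ⟪coneBoost v ω, a⟫ * ⟪coneBoost v ω, b⟫
      = ⟪(ω : E), boostSpatial v a⟫ * ⟪(ω : E), boostSpatial v b⟫
        + ⟪(ω : E), ⟪v, b⟫ • boostSpatial v a + ⟪v, a⟫ • boostSpatial v b⟫ + ⟪v, a⟫ * ⟪v, b⟫ := by
    rw [hinner, hinner, inner_add_right, real_inner_smul_right, real_inner_smul_right]
    ring
  have hspatial : ⟪boostSpatial v a, boostSpatial v b⟫ = ⟪a, b⟫ + ⟪v, a⟫ * ⟪v, b⟫ := by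
    rw [inner_boostSpatial_left, boostSpatial_boostSpatial, inner_add_right, real_inner_smul_right,
      real_inner_comm v b, real_inner_comm v a, mul_comm]
  have hlinear (c : E) : Integrable (fun ω : sphere (0 : E) 1 ↦ ⟪(ω : E), c⟫) μ.toSphere :=
    integrable_sphere_of_continuous μ (f := fun x : E ↦ ⟪x, c⟫) (by fun_prop)
  have hquadratic : Integrable (fun ω : sphere (0 : E) 1 ↦
      ⟪(ω : E), boostSpatial v a⟫ * ⟪(ω : E), boostSpatial v b⟫) μ.toSphere :=
    integrable_sphere_of_continuous μ
      (f := fun x : E ↦ ⟪x, boostSpatial v a⟫ * ⟪x, boostSpatial v b⟫) (by fun_prop)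
  simp only [hexpand]
  rw [integral_add (hquadratic.fun_add (hlinear _)) (integrable_const _),
    integral_add hquadratic (hlinear _), integral_sphere_inner_mul_inner, integral_sphere_inner,
    integral_const, μ.toSphere_real_apply_univ, hspatial, smul_eq_mul]
  ring

theorem vkg_sphere_integral_quartic_general (v a b : E) :
    ∫ ω : sphere (0 : E) 1, ⟪(ω : E), a⟫ * ⟪(ω : E), b⟫
        / (√(1 + ‖v‖ ^ 2) + ⟪(ω : E), v⟫) ^ (finrank ℝ E + 1) ∂μ.toSphere
      = μ.real (ball 0 1) * (⟪a, b⟫ + (finrank ℝ E + 1) * (⟪v, a⟫ * ⟪v, b⟫)) := by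
  have hcont := continuous_coneBoost (-v)
  have hf : Continuous fun x ↦ ⟪coneBoost (-v) x, a⟫ * ⟪coneBoost (-v) x, b⟫ := by fun_prop
  have hdiff : DifferentiableOn ℝ (coneBoost v) {0}ᶜ := fun x hx ↦
    (hasFDerivAt_coneBoost v hx).differentiableAt.differentiableWithinAt
  calc ∫ ω : sphere (0 : E) 1, ⟪(ω : E), a⟫ * ⟪(ω : E), b⟫
        / (√(1 + ‖v‖ ^ 2) + ⟪(ω : E), v⟫) ^ (finrank ℝ E + 1) ∂μ.toSphere
    _ = ∫ ω : sphere (0 : E) 1, ⟪coneBoost (-v) ω, a⟫ * ⟪coneBoost (-v) ω, b⟫ ∂μ.toSphere := by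
      rw [← integral_sphere_comp_normalize μ hdiff (bijOn_coneBoost v)
        (fun r hr x ↦ coneBoost_smul v hr x)
        (f := fun x ↦ ⟪coneBoost (-v) x, a⟫ * ⟪coneBoost (-v) x, b⟫)
        (integrable_sphere_of_continuous μ hf)]
      congr! 2 with ω
      have hω : (ω : E) ≠ 0 := ne_zero_of_mem_unit_sphere ω
      have hq : √(1 + ‖v‖ ^ 2) + ⟪(ω : E), v⟫ = ‖coneBoost v ω‖ := by
        simp [norm_coneBoost, lorentzFactor]
      have hq_pos : 0 < ‖coneBoost v ω‖ := norm_pos_iff.2 ((bijOn_coneBoost v).mapsTo hω)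
      rw [hq, det_fderiv_coneBoost v hω, norm_eq_of_mem_sphere, div_one, abs_norm,
        coneBoost_smul _ (inv_pos.2 hq_pos), coneBoost_neg_coneBoost, real_inner_smul_left,
        real_inner_smul_left, smul_eq_mul, smul_eq_mul, pow_succ]
      field_simp
    _ = μ.real (ball 0 1) * (⟪a, b⟫ + (finrank ℝ E + 1) * (⟪v, a⟫ * ⟪v, b⟫)) := by
      rw [integral_sphere_inner_coneBoost_mul_inner_coneBoost, inner_neg_left, inner_neg_left,
        neg_mul_neg]

end Boost

/-- For `v ∈ ℝ³` and `1 ≤ k, ℓ ≤ 3`,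
`∫_{|ω|=1} ω_k ω_ℓ dω/(√(1+|v|²)+ω·v)⁴ = (16π/3) v_k v_ℓ + (4π/3) δ_{kℓ}`. -/
theorem vkg_sphere_integral_quartic (k l : Fin 3) (v : EuclideanSpace ℝ (Fin 3)) :
    ∫ ω : Metric.sphere (0 : EuclideanSpace ℝ (Fin 3)) 1,
        (ω : EuclideanSpace ℝ (Fin 3)) k * (ω : EuclideanSpace ℝ (Fin 3)) l
          / (Real.sqrt (1 + ‖v‖ ^ 2) + ⟪(ω : EuclideanSpace ℝ (Fin 3)), v⟫) ^ 4
      ∂((volume : Measure (EuclideanSpace ℝ (Fin 3))).toSphere)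
    = (16 * π / 3) * v k * v l + (4 * π / 3) * (if k = l then (1 : ℝ) else 0) := by
  have hball : volume.real (ball (0 : EuclideanSpace ℝ (Fin 3)) 1) = 4 * π / 3 := by
    have hπ : 0 ≤ π * 4 / 3 := by positivity
    simp [measureReal_def, EuclideanSpace.volume_ball_fin_three, hπ, mul_comm]
  have h := vkg_sphere_integral_quartic_general volume v (EuclideanSpace.single k 1)
    (EuclideanSpace.single l 1)
  simp only [hball, finrank_euclideanSpace_fin, Nat.reduceAdd, Nat.cast_ofNat, conj_trivial,
    one_mul, EuclideanSpace.inner_single_right, PiLp.single_apply, eq_comm (a := l)] at h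
  linear_combination h
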